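/- arXiv:2509.21479 — 7 statements merged into one kernel-verified Lean document; each statement's English description precedes it below -/
import Mathlib

section
/- Let Â, A : Fin K → ℝ, λ ∈ ℝ, ρ ∈ ℕ, and define the nonconformity score S(Â, A) = sInf {s ∈ ℝ : L_λ(𝒮(Â, s), A) ≤ ρ}. Then: (i) for every threshold s with s > S(Â, A), the filtered set satisfies L_λ(𝒮(Â, s), A) ≤ ρ, i.e., filtering at any threshold strictly above the nonconformity score retains at most ρ generations whose gold-standard score is below λ; and (ii) if moreover ρ < |{k : A k < λ}| (so the admissible set of thresholds is bounded below), then L_λ(𝒮(Â, s), A) ≤ ρ implies s ≥ S(Â, A). -/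
/-- The filtered set `𝒮(Â, s) = {k : Â k ≥ s}` as a `Finset`. -/
noncomputable def filteredSet {K : ℕ} (Ahat : Fin K → ℝ) (s : ℝ) : Finset (Fin K) :=
  Finset.univ.filter (fun k => Ahat k ≥ s)

/-- The counting loss `L_λ(T, A) = |{k ∈ T : A k < λ}|`. -/
noncomputable def countLoss {K : ℕ} (lam : ℝ) (T : Finset (Fin K)) (A : Fin K → ℝ) : ℕ :=
  (T.filter (fun k => A k < lam)).card

/-- The nonconformity score `S(Â, A) = sInf {s : L_λ(𝒮(Â, s), A) ≤ ρ}`. -/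
noncomputable def nonconfScore {K : ℕ} (lam : ℝ) (ρ : ℕ) (Ahat A : Fin K → ℝ) : ℝ :=
  sInf {s : ℝ | countLoss lam (filteredSet Ahat s) A ≤ ρ}

theorem stmt_3 {K : ℕ} (Ahat A : Fin K → ℝ) (lam : ℝ) (ρ : ℕ) :
    (∀ s : ℝ, nonconfScore lam ρ Ahat A < s →
      countLoss lam (filteredSet Ahat s) A ≤ ρ) ∧
    (ρ < (Finset.univ.filter (fun k => A k < lam)).card →
      ∀ s : ℝ, countLoss lam (filteredSet Ahat s) A ≤ ρ →
        nonconfScore lam ρ Ahat A ≤ s) := by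
  constructor
  · intro s hs
    have hne : {s : ℝ | countLoss lam (filteredSet Ahat s) A ≤ ρ}.Nonempty := by
      obtain ⟨M, hM⟩ := (Set.finite_range Ahat).bddAbove
      refine ⟨M + 1, ?_⟩
      have h : filteredSet Ahat (M + 1) = ∅ := by
        unfold filteredSet
        refine Finset.filter_eq_empty_iff.mpr ?_
        intro k _ hk
        have := hM (Set.mem_range_self k)
        linarith
      simp [h, countLoss]
    obtain ⟨t, ht, hts⟩ := exists_lt_of_csInf_lt hne hs
    refine le_trans (Finset.card_le_card ?_) ht
    intro k hk
    simp only [filteredSet, Finset.mem_filter, Finset.mem_univ, true_and] at hk ⊢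
    exact ⟨by linarith [hk.1], hk.2⟩
  · intro hρ s hs
    refine csInf_le ?_ hs
    obtain ⟨m, hm⟩ := (Set.finite_range Ahat).bddBelow
    refine ⟨m, ?_⟩
    intro t ht
    by_contra hlt
    have h : filteredSet Ahat t = Finset.univ := by
      unfold filteredSet
      refine Finset.filter_true_of_mem ?_
      intro k _
      have := hm (Set.mem_range_self k)
      linarith
    have ht' : countLoss lam (filteredSet Ahat t) A ≤ ρ := ht
    rw [h] at ht'
    exact absurd hρ (not_lt.mpr ht')
end

section
/- Let Â, A : Fin K → ℝ, λ ∈ ℝ, ρ ∈ ℕ, and let B = {k : A k < λ} be the set of low-quality indices. If |B| > ρ, then the nonconformity score S(Â, A) = sInf {s ∈ ℝ : L_λ(𝒮(Â, s), A) ≤ ρ} equals the (ρ+1)-th largest element of the multiset {Â k : k ∈ B} (counted with multiplicity), and the admissible set {s ∈ ℝ : L_λ(𝒮(Â, s), A) ≤ ρ} equals the open ray (S(Â, A), ∞). -/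
theorem countP_le_iff_getD_lt (s : ℝ) (l : List ℝ) (hl : l.Pairwise (· ≥ ·)) (n : ℕ)
    (hn : n < l.length) : l.countP (fun x => decide (s ≤ x)) ≤ n ↔ l.getD n 0 < s := by
  induction l generalizing n with
  | nil => simp at hn
  | cons a l ih =>
    rw [List.pairwise_cons] at hl
    obtain ⟨ha, hl⟩ := hl
    by_cases hs : s ≤ a
    · rw [List.countP_cons_of_pos (by simpa using hs)]
      cases n with
      | zero => simpa using hs
      | succ n =>
        have := ih hl n (by simpa using hn)
        simp only [List.getD_cons_succ]
        rw [← this]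
        omega
    · have h0 : (a :: l).countP (fun x => decide (s ≤ x)) = 0 := by
        rw [List.countP_eq_zero]
        intro b hb
        rcases List.mem_cons.1 hb with rfl | hb
        · simpa using hs
        · have := ha b hb
          simp only [decide_eq_true_eq]
          intro h
          exact hs (h.trans this)
      rw [h0]
      refine iff_of_true (Nat.zero_le _) ?_
      rw [List.getD_eq_getElem _ _ hn]
      rcases List.mem_cons.1 (List.getElem_mem hn) with h | h
      · rw [h]; exact not_le.1 hs
      · exact lt_of_le_of_lt (ha _ h) (not_le.1 hs)

theorem stmt_5 {K : ℕ} (Ahat A : Fin K → ℝ) (lam : ℝ) (ρ : ℕ)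
    (hρ : ρ < (Finset.univ.filter (fun k => A k < lam)).card) :
    nonconfScore lam ρ Ahat A =
      (((Finset.univ.filter (fun k => A k < lam)).val.map Ahat).sort (· ≥ ·)).getD ρ 0 ∧
    {s : ℝ | countLoss lam (filteredSet Ahat s) A ≤ ρ} =
      Set.Ioi (nonconfScore lam ρ Ahat A) := by
  have key : {s : ℝ | countLoss lam (filteredSet Ahat s) A ≤ ρ} = Set.Ioi
      ((((Finset.univ.filter (fun k => A k < lam)).val.map Ahat).sort (· ≥ ·)).getD ρ 0) := by
    ext s
    rw [Set.mem_ofPred_eq, Set.mem_Ioi, ← countP_le_iff_getD_lt s _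
      (Multiset.pairwise_sort _ _) ρ (by rw [Multiset.length_sort, Multiset.card_map]; exact hρ)]
    rw [← Multiset.coe_countP, Multiset.sort_eq, Multiset.countP_map]
    unfold countLoss filteredSet
    rw [Finset.filter_comm]
    rfl
  have h1 : nonconfScore lam ρ Ahat A =
      (((Finset.univ.filter (fun k => A k < lam)).val.map Ahat).sort (· ≥ ·)).getD ρ 0 := by
    unfold nonconfScore
    rw [key, csInf_Ioi]
  exact ⟨h1, by rw [h1, key]⟩
end

section
/- Coverage transfer for conformal filtering: let (Ω, P) be a probability space, let Â, A : Ω → (Fin K → ℝ) be random score vectors, and ŝ : Ω → ℝ a random threshold; fix λ ∈ ℝ, ρ ∈ ℕ, α ∈ (0,1). If P(S(Â, A) < ŝ) ≥ 1 − α, then P(L_λ(𝒮(Â, ŝ), A) ≤ ρ) ≥ 1 − α; that is, whenever the conformal cutoff strictly exceeds the nonconformity score with probability at least 1 − α, the filtered set contains at most ρ low-quality generations with probability at least 1 − α. -/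
open MeasureTheory in
theorem stmt_7 {K : ℕ} {Ω : Type*} [MeasurableSpace Ω]
    (P : Measure Ω) [IsProbabilityMeasure P]
    (Ahat A : Ω → Fin K → ℝ) (shat : Ω → ℝ)
    (hAhat : Measurable Ahat) (hA : Measurable A) (hshat : Measurable shat)
    (lam : ℝ) (ρ : ℕ) (α : ℝ) (hα : α ∈ Set.Ioo (0 : ℝ) 1)
    (hcov : ENNReal.ofReal (1 - α) ≤
      P {ω | nonconfScore lam ρ (Ahat ω) (A ω) < shat ω}) :
    ENNReal.ofReal (1 - α) ≤
      P {ω | countLoss lam (filteredSet (Ahat ω) (shat ω)) (A ω) ≤ ρ} := by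
  refine hcov.trans (measure_mono fun ω hω => ?_)
  simp only [Set.mem_setOf_eq] at hω ⊢
  have hne : {s : ℝ | countLoss lam (filteredSet (Ahat ω) s) (A ω) ≤ ρ}.Nonempty := by
    refine ⟨∑ k, |Ahat ω k| + 1, ?_⟩
    have hempty : filteredSet (Ahat ω) (∑ k, |Ahat ω k| + 1) = ∅ := by
      unfold filteredSet
      refine Finset.filter_eq_empty_iff.mpr fun k _ hk => ?_
      have h1 : |Ahat ω k| ≤ ∑ k, |Ahat ω k| :=
        Finset.single_le_sum (f := fun k => |Ahat ω k|) (fun i _ => abs_nonneg _)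
          (Finset.mem_univ k)
      have h2 := le_abs_self (Ahat ω k)
      linarith
    simp [hempty, countLoss]
  obtain ⟨s, hs, hlt⟩ := exists_lt_of_csInf_lt hne hω
  refine le_trans (Finset.card_le_card ?_) hs
  apply Finset.filter_subset_filter
  intro k hk
  simp only [filteredSet, Finset.mem_filter, Finset.mem_univ, true_and] at hk ⊢
  linarith
end

section
/- Kernel Bayes formula: let E be a standard Borel space, μ and ν probability measures on E, W : E × E → ℝ≥0 jointly measurable with ∫ W(x, x') dμ(x') = 1 for all x, κ the Markov kernel κ(x) = μ.withDensity(W(x, ·)), and P = ν ⊗ κ the law of (X, X'). Then for every bounded measurable h : E → ℝ, the function G(x') = (∫ h(x) · W(x, x') dν(x)) / (∫ W(x, x') dν(x)) (defined to be 0 where the denominator vanishes) gives a version of the conditional expectation: G ∘ snd is P-almost-everywhere equal to the conditional expectation of h ∘ fst given the σ-algebra generated by the second coordinate. -/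
open MeasureTheory ProbabilityTheory
open scoped NNReal ENNReal

theorem stmt_9 {E : Type*} [MeasurableSpace E] [StandardBorelSpace E]
    (μ ν : Measure E) [IsProbabilityMeasure μ] [IsProbabilityMeasure ν]
    (W : E → E → ℝ≥0) (hW : Measurable (Function.uncurry W))
    (hdens : ∀ x : E, ∫⁻ x', (W x x' : ℝ≥0∞) ∂μ = 1)
    (κ : Kernel E E) [IsMarkovKernel κ]
    (hκ : ∀ x : E, κ x = μ.withDensity (fun x' => (W x x' : ℝ≥0∞)))
    (h : E → ℝ) (hh : Measurable h) (hbdd : ∃ C : ℝ, ∀ x, |h x| ≤ C) :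
    (fun p : E × E =>
        (∫ x, h x * (W x p.2 : ℝ) ∂ν) / (∫ x, (W x p.2 : ℝ) ∂ν))
      =ᵐ[ν.compProd κ]
      (ν.compProd κ)[fun p : E × E => h p.1 |
        MeasurableSpace.comap (Prod.snd : E × E → E) inferInstance] := by
  obtain ⟨C, hC⟩ := hbdd
  have hP : ν.compProd κ = (ν.prod μ).withDensity (fun p => ((Function.uncurry W p : ℝ≥0) : ℝ≥0∞)) := by
    ext s hs
    rw [Measure.compProd_apply hs, withDensity_apply _ hs, ← lintegral_indicator hs,
      lintegral_prod _ (by fun_prop)]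
    refine lintegral_congr fun x => ?_
    rw [hκ, withDensity_apply _ (measurable_prodMk_left hs),
      ← lintegral_indicator (measurable_prodMk_left hs)]
    rfl
  have hWm : Measurable (fun p : E × E => ((W p.1 p.2 : ℝ≥0) : ℝ)) := hW.coe_nnreal_real
  have hWint : Integrable (fun p : E × E => (W p.1 p.2 : ℝ)) (ν.prod μ) := by
    refine ⟨hWm.aestronglyMeasurable, ?_⟩
    rw [hasFiniteIntegral_iff_enorm, lintegral_prod _ (by fun_prop)]
    have : ∀ x, ∫⁻ y, ‖(W x y : ℝ)‖ₑ ∂μ = 1 := by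
      intro x
      rw [← hdens x]
      refine lintegral_congr fun y => ?_
      simp
    simp [hdens]
  have key : ∀ F : E × E → ℝ, Measurable F → (∀ p, |F p| ≤ C) →
      ∫ p, F p ∂(ν.compProd κ) = ∫ y, ∫ x, F (x, y) * (W x y : ℝ) ∂ν ∂μ := by
    intro F hF hFC
    rw [hP, integral_withDensity_eq_integral_smul hW]
    have hi : Integrable (fun p : E × E => F p * (W p.1 p.2 : ℝ)) (ν.prod μ) :=
      hWint.bdd_mul hF.aestronglyMeasurable (Filter.Eventually.of_forall hFC)
    rw [← integral_prod_symm _ hi]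
    refine integral_congr_ae (Filter.Eventually.of_forall fun p => ?_)
    simp [NNReal.smul_def, Function.uncurry, mul_comm]
  have hNb : ∀ y, Integrable (fun x => (W x y : ℝ)) ν →
      |∫ x, h x * (W x y : ℝ) ∂ν| ≤ C * ∫ x, (W x y : ℝ) ∂ν := by
    intro y hy
    rw [← integral_const_mul, ← Real.norm_eq_abs]
    refine norm_integral_le_of_norm_le (hy.const_mul C) (Filter.Eventually.of_forall fun x => ?_)
    rw [norm_mul, Real.norm_eq_abs, Real.norm_eq_abs, abs_of_nonneg (W x y).coe_nonneg]
    exact mul_le_mul_of_nonneg_right (hC x) (W x y).coe_nonneg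
  set G : E → ℝ := fun y => (∫ x, h x * (W x y : ℝ) ∂ν) / (∫ x, (W x y : ℝ) ∂ν) with hG
  have hGm : Measurable G := by
    have h1 : StronglyMeasurable (fun y => ∫ x, h x * (W x y : ℝ) ∂ν) :=
      StronglyMeasurable.integral_prod_left' (μ := ν)
        (f := fun p : E × E => h p.1 * (W p.1 p.2 : ℝ))
        ((hh.comp measurable_fst).mul hWm).stronglyMeasurable
    have h2 : StronglyMeasurable (fun y => ∫ x, (W x y : ℝ) ∂ν) :=
      StronglyMeasurable.integral_prod_left' (μ := ν)
        (f := fun p : E × E => (W p.1 p.2 : ℝ)) hWm.stronglyMeasurable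
    exact h1.measurable.div h2.measurable
  have hD0 : ∀ y, 0 ≤ ∫ x, (W x y : ℝ) ∂ν := fun y =>
    integral_nonneg fun x => (W x y).coe_nonneg
  have hGb : ∀ y, |G y| ≤ C := by
    intro y
    have hC0 : 0 ≤ C := (abs_nonneg _).trans (hC y)
    by_cases hy : Integrable (fun x => (W x y : ℝ)) ν
    · rw [hG]
      simp only
      rw [abs_div, abs_of_nonneg (hD0 y)]
      exact div_le_of_le_mul₀ (hD0 y) hC0 (hNb y hy)
    · simp only [hG]
      rw [integral_undef hy]
      simpa using hC0
  have hm : MeasurableSpace.comap (Prod.snd : E × E → E) inferInstance ≤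
      (inferInstance : MeasurableSpace (E × E)) := measurable_snd.comap_le
  have hGi : Integrable (fun p : E × E => G p.2) (ν.compProd κ) :=
    Integrable.of_bound (hGm.comp measurable_snd).aestronglyMeasurable C
      (Filter.Eventually.of_forall fun p => hGb p.2)
  have hhi : Integrable (fun p : E × E => h p.1) (ν.compProd κ) :=
    Integrable.of_bound (hh.comp measurable_fst).aestronglyMeasurable C
      (Filter.Eventually.of_forall fun p => hC p.1)
  refine ae_eq_condExp_of_forall_setIntegral_eq hm hhi (fun s _ _ => hGi.integrableOn) ?_ ?_
  · rintro s ⟨t, ht, rfl⟩ -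
    have hs : MeasurableSet ((Prod.snd : E × E → E) ⁻¹' t) := measurable_snd ht
    change ∫ p in Prod.snd ⁻¹' t, (G ∘ Prod.snd) p ∂(ν.compProd κ) =
      ∫ p in Prod.snd ⁻¹' t, (h ∘ Prod.fst) p ∂(ν.compProd κ)
    rw [← integral_indicator hs, ← integral_indicator hs,
      key _ ((hGm.comp measurable_snd).indicator hs) ?_,
      key _ ((hh.comp measurable_fst).indicator hs) ?_]
    · refine integral_congr_ae ?_
      filter_upwards [hWint.prod_left_ae] with y hy
      by_cases hyt : y ∈ t
      · simp only [Set.indicator, Set.mem_preimage, hyt, if_true, Function.comp]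
        rw [integral_const_mul]
        by_cases hD : ∫ x, (W x y : ℝ) ∂ν = 0
        · have := hNb y hy
          rw [hD, mul_zero] at this
          rw [hD, mul_zero, abs_nonpos_iff.mp this]
        · exact div_mul_cancel₀ _ hD
      · simp [Set.indicator, hyt]
    · intro p
      have := hC p.1
      by_cases hp : p.2 ∈ t <;> simp [Set.indicator, hp, this, (abs_nonneg _).trans this]
    · intro p
      have := hGb p.2
      by_cases hp : p.2 ∈ t
      · simpa [Set.indicator, hp] using this
      · simpa [Set.indicator, hp] using (abs_nonneg _).trans this
  · exact (hGm.comp (comap_measurable Prod.snd)).stronglyMeasurable.aestronglyMeasurable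
end

section
/- Kernel Bayes formula with auxiliary variables: let E, F be standard Borel spaces, μ a probability measure on E, ν a probability measure on E × F (the law of (X, Z)), and W : E × E → ℝ≥0 jointly measurable with ∫ W(x, x') dμ(x') = 1 for all x. Let κ be the Markov kernel from E × F to E given by κ(x, z) = μ.withDensity(W(x, ·)) (depending only on x), and let P = ν ⊗ κ be the law of ((X, Z), X') on (E × F) × E. Then for every measurable set B ⊆ E × F, defining d(x') = ∫_{E×F} W(x, x') dν(x, z) and N_B(x') = ∫_{E×F} 1_B(x, z) · W(x, x') dν(x, z), the function x' ↦ N_B(x') / d(x') (set to 0 where d vanishes), composed with the second projection, is P-almost-everywhere equal to the conditional expectation of the indicator 1_B ∘ fst given the σ-algebra generated by the second coordinate; i.e., P((X, Z) ∈ B | X' = x') = N_B(x') / d(x'). -/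
open MeasureTheory ProbabilityTheory
open scoped NNReal ENNReal

theorem aux_lint {E F : Type*} [MeasurableSpace E] [MeasurableSpace F]
    (μ : Measure E) [IsProbabilityMeasure μ]
    (ν : Measure (E × F)) [IsProbabilityMeasure ν]
    (W : E → E → ℝ≥0) (hW : Measurable (Function.uncurry W))
    (κ : Kernel (E × F) E) [IsMarkovKernel κ]
    (hκ : ∀ p : E × F, κ p = μ.withDensity (fun x' => (W p.1 x' : ℝ≥0∞)))
    (f : (E × F) × E → ℝ≥0∞) (hf : Measurable f) :
    ∫⁻ q, f q ∂(ν.compProd κ) = ∫⁻ x', ∫⁻ p, (W p.1 x' : ℝ≥0∞) * f (p, x') ∂ν ∂μ := by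
  have hW2 : Measurable (fun q : (E × F) × E => (W q.1.1 q.2 : ℝ≥0∞)) :=
    (hW.comp (by fun_prop : Measurable (fun q : (E × F) × E => (q.1.1, q.2)))).coe_nnreal_ennreal
  rw [Measure.lintegral_compProd hf]
  rw [← lintegral_lintegral_swap (μ := ν) (ν := μ)
    (f := fun p x' => (W p.1 x' : ℝ≥0∞) * f (p, x')) (hW2.mul hf).aemeasurable]
  refine lintegral_congr fun p => ?_
  rw [hκ p, lintegral_withDensity_eq_lintegral_mul]
  · rfl
  · exact hW2.comp measurable_prodMk_left
  · exact hf.comp measurable_prodMk_left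

theorem stmt_10 {E F : Type*} [MeasurableSpace E] [StandardBorelSpace E]
    [MeasurableSpace F] [StandardBorelSpace F]
    (μ : Measure E) [IsProbabilityMeasure μ]
    (ν : Measure (E × F)) [IsProbabilityMeasure ν]
    (W : E → E → ℝ≥0) (hW : Measurable (Function.uncurry W))
    (hdens : ∀ x : E, ∫⁻ x', (W x x' : ℝ≥0∞) ∂μ = 1)
    (κ : Kernel (E × F) E) [IsMarkovKernel κ]
    (hκ : ∀ p : E × F, κ p = μ.withDensity (fun x' => (W p.1 x' : ℝ≥0∞)))
    (B : Set (E × F)) (hB : MeasurableSet B) :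
    (fun q : (E × F) × E =>
        (∫ p : E × F, B.indicator (fun _ => (1 : ℝ)) p * (W p.1 q.2 : ℝ) ∂ν) /
          (∫ p : E × F, (W p.1 q.2 : ℝ) ∂ν))
      =ᵐ[ν.compProd κ]
      (ν.compProd κ)[fun q : (E × F) × E => B.indicator (fun _ => (1 : ℝ)) q.1 |
        MeasurableSpace.comap (Prod.snd : (E × F) × E → E) inferInstance] := by
  classical
  have hWr (x' : E) : Measurable (fun p : E × F => (W p.1 x' : ℝ≥0∞)) :=
    (hW.comp (by fun_prop : Measurable (fun p : E × F => (p.1, x')))).coe_nnreal_ennreal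
  have hW2 : Measurable (fun q : E × (E × F) => (W q.2.1 q.1 : ℝ≥0∞)) :=
    (hW.comp (by fun_prop : Measurable (fun q : E × (E × F) => (q.2.1, q.1)))).coe_nnreal_ennreal
  let IB : E × F → ℝ≥0∞ := B.indicator (fun _ => 1)
  have hIB : Measurable IB := measurable_const.indicator hB
  let N : E → ℝ≥0∞ := fun x' => ∫⁻ p, (W p.1 x' : ℝ≥0∞) * IB p ∂ν
  let d : E → ℝ≥0∞ := fun x' => ∫⁻ p, (W p.1 x' : ℝ≥0∞) ∂ν
  have hN : Measurable N := (hW2.mul (hIB.comp measurable_snd)).lintegral_prod_right'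
  have hd : Measurable d := hW2.lintegral_prod_right'
  have hNd (x' : E) : N x' ≤ d x' := by
    refine lintegral_mono fun p => ?_
    by_cases hp : p ∈ B <;> simp [IB, hp]
  let g : E → ℝ := fun x' => (N x').toReal / (d x').toReal
  have hg : Measurable g := hN.ennreal_toReal.div hd.ennreal_toReal
  have hg0 (x' : E) : 0 ≤ g x' := by positivity
  have hg1 (x' : E) : g x' ≤ 1 := by
    by_cases h : d x' = ∞
    · simp [g, h]
    · exact div_le_one_of_le₀ (ENNReal.toReal_mono h (hNd x')) ENNReal.toReal_nonneg
  have hd1 : ∫⁻ x', d x' ∂μ = 1 := by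
    have := aux_lint μ ν W hW κ hκ (fun _ => 1) measurable_const
    simpa [d] using this.symm
  have hdfin : ∀ᵐ x' ∂μ, d x' < ∞ := ae_lt_top hd (by simp [hd1])
  have hmul (x' : E) (h : d x' < ∞) : d x' * ENNReal.ofReal (g x') = N x' := by
    by_cases h0 : d x' = 0
    · have : N x' = 0 := le_antisymm (h0 ▸ hNd x') bot_le
      simp [h0, this]
    · have hNf : N x' ≠ ∞ := ((hNd x').trans_lt h).ne
      have hp : 0 < (d x').toReal := ENNReal.toReal_pos h0 h.ne
      rw [ENNReal.ofReal_div_of_pos hp, ENNReal.ofReal_toReal h.ne, ENNReal.ofReal_toReal hNf]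
      exact ENNReal.mul_div_cancel h0 h.ne
  have hfun : (fun q : (E × F) × E =>
        (∫ p : E × F, B.indicator (fun _ => (1 : ℝ)) p * (W p.1 q.2 : ℝ) ∂ν) /
          (∫ p : E × F, (W p.1 q.2 : ℝ) ∂ν)) = fun q => g q.2 := by
    funext q
    have hm : Measurable (fun p : E × F => (W p.1 q.2 : ℝ)) :=
      (hW.comp (by fun_prop : Measurable (fun p : E × F => (p.1, q.2)))).coe_nnreal_real
    have hmB : Measurable (B.indicator (fun _ => (1 : ℝ))) := measurable_const.indicator hB
    simp only [g]
    congr 1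
    · rw [integral_eq_lintegral_of_nonneg_ae _ (by exact (hmB.mul hm).aestronglyMeasurable)]
      · congr 1
        refine lintegral_congr fun p => ?_
        by_cases hp : p ∈ B <;> simp [IB, hp]
      · refine Filter.Eventually.of_forall fun p => ?_
        by_cases hp : p ∈ B <;> simp [hp]
    · rw [integral_eq_lintegral_of_nonneg_ae _ hm.aestronglyMeasurable]
      · congr 1
        refine lintegral_congr fun p => ?_
        simp
      · exact Filter.Eventually.of_forall fun p => by simp
  rw [hfun]
  have hmf : Measurable (fun q : (E × F) × E => B.indicator (fun _ => (1 : ℝ)) q.1) :=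
    (measurable_const.indicator hB).comp measurable_fst
  have hf0 (q : (E × F) × E) : 0 ≤ B.indicator (fun _ => (1 : ℝ)) q.1 :=
    Set.indicator_nonneg (fun _ _ => zero_le_one) _
  have hmg : Measurable (fun q : (E × F) × E => g q.2) := hg.comp measurable_snd
  have hgi : Integrable (fun q : (E × F) × E => g q.2) (ν.compProd κ) := by
    refine Integrable.of_bound hmg.aestronglyMeasurable 1 (Filter.Eventually.of_forall fun q => ?_)
    rw [Real.norm_of_nonneg (hg0 _)]
    exact hg1 _
  refine ae_eq_condExp_of_forall_setIntegral_eq measurable_snd.comap_le ?_ ?_ ?_ ?_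
  · refine Integrable.of_bound hmf.aestronglyMeasurable 1 (Filter.Eventually.of_forall fun q => ?_)
    by_cases hp : q.1 ∈ B <;> simp [hp]
  · exact fun s _ _ => hgi.integrableOn
  · rintro s ⟨A, hA, rfl⟩ -
    have hs : MeasurableSet (Prod.snd ⁻¹' A : Set ((E × F) × E)) := measurable_snd hA
    rw [integral_eq_lintegral_of_nonneg_ae (Filter.Eventually.of_forall fun q => hg0 _)
        hmg.aestronglyMeasurable,
      integral_eq_lintegral_of_nonneg_ae (Filter.Eventually.of_forall hf0)
        hmf.aestronglyMeasurable]
    congr 1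
    rw [← lintegral_indicator hs, ← lintegral_indicator hs,
      aux_lint μ ν W hW κ hκ _ (hmg.ennreal_ofReal.indicator hs),
      aux_lint μ ν W hW κ hκ _ (hmf.ennreal_ofReal.indicator hs)]
    refine lintegral_congr_ae ?_
    filter_upwards [hdfin] with x' hx'
    by_cases hxA : x' ∈ A
    · simp only [Set.indicator, Set.mem_preimage, hxA, if_true]
      rw [lintegral_mul_const _ (hWr x')]
      refine (hmul x' hx').trans (lintegral_congr fun p => ?_)
      by_cases hp : p ∈ B <;> simp [IB, hp]
    · simp [Set.indicator, hxA]
  · exact (hg.comp (comap_measurable _)).aestronglyMeasurable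
end

section
/- Conditional coverage deviation formula (reduction of the paper's Lemma 1): under the kernel-resampling setup with auxiliary variables — E, F standard Borel, μ a probability measure on E, ν a probability measure on E × F, W : E × E → ℝ≥0 jointly measurable with ∫ W(x, x') dμ(x') = 1 for all x, κ(x, z) = μ.withDensity(W(x, ·)), P = ν ⊗ κ the law of ((X, Z), X') — let B ⊆ E × F be measurable, α ∈ (0, 1), γ ∈ ℝ, and m : E → ℝ measurable such that for μ-almost every x', ∫_{E×F} W(x, x') · (1_B(x, z) − (1 − α)) dν(x, z) = −γ · m(x'). Then for μ-almost every x' with d(x') = ∫_{E×F} W(x, x') dν(x, z) > 0, the conditional probability satisfies P((X, Z) ∈ B | X' = x') = 1 − α − γ · m(x') / d(x'). -/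
open MeasureTheory ProbabilityTheory
open scoped NNReal ENNReal

theorem stmt_11 {E F : Type*} [MeasurableSpace E] [StandardBorelSpace E]
    [MeasurableSpace F] [StandardBorelSpace F]
    (μ : Measure E) [IsProbabilityMeasure μ]
    (ν : Measure (E × F)) [IsProbabilityMeasure ν]
    (W : E → E → ℝ≥0) (hW : Measurable (Function.uncurry W))
    (hdens : ∀ x : E, ∫⁻ x', (W x x' : ℝ≥0∞) ∂μ = 1)
    (κ : Kernel (E × F) E) [IsMarkovKernel κ]
    (hκ : ∀ p : E × F, κ p = μ.withDensity (fun x' => (W p.1 x' : ℝ≥0∞)))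
    (B : Set (E × F)) (hB : MeasurableSet B)
    (α : ℝ) (hα : α ∈ Set.Ioo (0 : ℝ) 1) (γ : ℝ)
    (m : E → ℝ) (hm : Measurable m)
    (hgap : ∀ᵐ x' ∂μ,
      ∫ p : E × F, (W p.1 x' : ℝ) * (B.indicator (fun _ => (1 : ℝ)) p - (1 - α)) ∂ν
        = -γ * m x') :
    ∃ G : E → ℝ,
      ((fun q : (E × F) × E => G q.2)
        =ᵐ[ν.compProd κ]
        (ν.compProd κ)[fun q : (E × F) × E => B.indicator (fun _ => (1 : ℝ)) q.1 |
          MeasurableSpace.comap (Prod.snd : (E × F) × E → E) inferInstance]) ∧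
      ∀ᵐ x' ∂μ, 0 < ∫ p : E × F, (W p.1 x' : ℝ) ∂ν →
        G x' = 1 - α - γ * m x' / ∫ p : E × F, (W p.1 x' : ℝ) ∂ν := by
  classical
  set w : (E × F) × E → ℝ≥0 := fun q => W q.1.1 q.2 with hw_def
  have hw : Measurable w :=
    hW.comp ((measurable_fst.comp measurable_fst).prodMk measurable_snd)
  have hP : ν.compProd κ = (ν.prod μ).withDensity (fun q => (w q : ℝ≥0∞)) := by
    ext s hs
    rw [Measure.compProd_apply hs, withDensity_apply _ hs, ← lintegral_indicator hs,
      lintegral_prod _ ((hw.coe_nnreal_ennreal.indicator hs).aemeasurable)]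
    refine lintegral_congr fun p => ?_
    rw [hκ, withDensity_apply _ (measurable_prodMk_left hs),
      ← lintegral_indicator (measurable_prodMk_left hs)]
    rfl
  have hwm : Measurable (fun q => (w q : ℝ)) := hw.coe_nnreal_real
  have hwint : Integrable (fun q => (w q : ℝ)) (ν.prod μ) := by
    refine ⟨hwm.aestronglyMeasurable, ?_⟩
    rw [hasFiniteIntegral_iff_enorm]
    have h1 : ∫⁻ q, ‖(w q : ℝ)‖ₑ ∂(ν.prod μ) = ∫⁻ q, (w q : ℝ≥0∞) ∂(ν.prod μ) := by
      refine lintegral_congr fun q => ?_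
      simp
    rw [h1, lintegral_prod _ hw.coe_nnreal_ennreal.aemeasurable]
    simp [hw_def, hdens]
  set b : E × F → ℝ := B.indicator (fun _ => (1 : ℝ)) with hb_def
  have hbm : Measurable b := measurable_const.indicator hB
  have hb0 : ∀ p, 0 ≤ b p := fun p => Set.indicator_nonneg (fun _ _ => zero_le_one) p
  have hb1 : ∀ p, b p ≤ 1 := fun p => Set.indicator_le_self' (fun _ _ => zero_le_one) p
  have hbn : ∀ p, ‖b p‖ ≤ 1 := fun p => by
    rw [Real.norm_of_nonneg (hb0 p)]; exact hb1 p
  set d : E → ℝ := fun x' => ∫ p : E × F, (W p.1 x' : ℝ) ∂ν with hd_def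
  set N : E → ℝ := fun x' => ∫ p : E × F, (W p.1 x' : ℝ) * b p ∂ν with hN_def
  have hdm : Measurable d :=
    (StronglyMeasurable.integral_prod_left' (μ := ν) hwm.stronglyMeasurable).measurable
  have hNm : Measurable N :=
    (StronglyMeasurable.integral_prod_left' (μ := ν)
      (hwm.mul (hbm.comp measurable_fst)).stronglyMeasurable).measurable
  have hmulb : ∀ x', Integrable (fun p : E × F => (W p.1 x' : ℝ)) ν →
      Integrable (fun p : E × F => (W p.1 x' : ℝ) * b p) ν := fun x' h =>
    h.mul_bdd (c := 1) hbm.aestronglyMeasurable (Filter.Eventually.of_forall hbn)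
  have hN0 : ∀ x', 0 ≤ N x' := fun x' => integral_nonneg fun p => mul_nonneg (by simp) (hb0 p)
  have hd0 : ∀ x', 0 ≤ d x' := fun x' => integral_nonneg fun p => by simp
  have hNd : ∀ x', Integrable (fun p : E × F => (W p.1 x' : ℝ)) ν → N x' ≤ d x' := fun x' h =>
    integral_mono (hmulb x' h) h fun p => mul_le_of_le_one_right (by simp) (hb1 p)
  have hae : ∀ᵐ x' ∂μ, Integrable (fun p : E × F => (W p.1 x' : ℝ)) ν := hwint.prod_left_ae
  have hGb : ∀ x', ‖N x' / d x'‖ ≤ 1 := by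
    intro x'
    rw [Real.norm_of_nonneg (div_nonneg (hN0 x') (hd0 x'))]
    by_cases h : Integrable (fun p : E × F => (W p.1 x' : ℝ)) ν
    · exact div_le_one_of_le₀ (hNd x' h) (hd0 x')
    · have : d x' = 0 := integral_undef h
      simp [this]
  have hGm : Measurable (fun x' => N x' / d x') := hNm.div hdm
  have hsm : MeasurableSpace.comap (Prod.snd : (E × F) × E → E) inferInstance
      ≤ (inferInstance : MeasurableSpace ((E × F) × E)) := measurable_snd.comap_le
  refine ⟨fun x' => N x' / d x', ?_, ?_⟩
  · have hGi : Integrable (fun q : (E × F) × E => N q.2 / d q.2) (ν.compProd κ) :=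
      Integrable.of_bound (hGm.comp measurable_snd).aestronglyMeasurable 1
        (Filter.Eventually.of_forall fun q => hGb q.2)
    have hbi : Integrable (fun q : (E × F) × E => b q.1) (ν.compProd κ) :=
      Integrable.of_bound (hbm.comp measurable_fst).aestronglyMeasurable 1
        (Filter.Eventually.of_forall fun q => hbn q.1)
    refine ae_eq_condExp_of_forall_setIntegral_eq hsm hbi (fun s _ _ => hGi.integrableOn) ?_ ?_
    · rintro _ ⟨A, hA, rfl⟩ -
      have hA' : MeasurableSet (Prod.snd ⁻¹' A : Set ((E × F) × E)) := measurable_snd hA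
      have key : ∀ f : (E × F) × E → ℝ, Measurable f → (∀ q, ‖f q‖ ≤ 1) →
          ∫ q in Prod.snd ⁻¹' A, f q ∂(ν.compProd κ)
            = ∫ x', A.indicator (fun x' => ∫ p, (W p.1 x' : ℝ) * f (p, x') ∂ν) x' ∂μ := by
        intro f hf hf1
        have hi : Integrable (fun q => (w q : ℝ) * f q) (ν.prod μ) :=
          hwint.mul_bdd (c := 1) hf.aestronglyMeasurable (Filter.Eventually.of_forall hf1)
        rw [hP, setIntegral_withDensity_eq_setIntegral_smul hw _ hA', ← integral_indicator hA']
        simp only [NNReal.smul_def, smul_eq_mul]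
        rw [integral_prod_symm _ (hi.indicator hA')]
        refine integral_congr_ae (Filter.Eventually.of_forall fun x' => ?_)
        by_cases hx : x' ∈ A
        · simp [Set.indicator, hx, hw_def]
        · simp [Set.indicator, hx]
      rw [key (fun q => N q.2 / d q.2) (hGm.comp measurable_snd) (fun q => hGb q.2),
        key (fun q => b q.1) (hbm.comp measurable_fst) (fun q => hbn q.1)]
      refine integral_congr_ae ?_
      filter_upwards [hae] with x' hx'
      by_cases hx : x' ∈ A
      · simp only [Set.indicator_of_mem hx]
        rw [integral_mul_const]
        change d x' * (N x' / d x') = N x'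
        rcases eq_or_ne (d x') 0 with h | h
        · have := hNd x' hx'
          rw [h] at this ⊢
          rw [le_antisymm this (hN0 x')]; simp
        · field_simp
      · simp [hx]
    · refine StronglyMeasurable.aestronglyMeasurable ?_
      exact (hGm.comp (comap_measurable Prod.snd)).stronglyMeasurable
  · filter_upwards [hae, hgap] with x' hx' hg hpos
    have h2 : N x' - d x' * (1 - α) = -γ * m x' := by
      rw [← hg, hN_def, hd_def]
      have h3 : ∀ p : E × F, (W p.1 x' : ℝ) * (b p - (1 - α))
          = (W p.1 x' : ℝ) * b p - (W p.1 x' : ℝ) * (1 - α) := fun p => mul_sub _ _ _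
      simp only [h3]
      rw [integral_sub (hmulb x' hx') (hx'.mul_const _), integral_mul_const]
    have hpos' : 0 < d x' := hpos
    change N x' / d x' = 1 - α - γ * m x' / d x'
    rw [eq_sub_iff_add_eq, ← add_div, div_eq_iff hpos'.ne']
    linarith
end

section
/- Exchangeable order-statistic coverage: let n ≥ 1 and let S : Ω → (Fin (n+1) → ℝ) be a random vector on a probability space (Ω, P) whose law is exchangeable, i.e., for every permutation σ of Fin (n+1), the vector (S_{σ(0)}, …, S_{σ(n)}) has the same law as (S_0, …, S_n). Fix k with 1 ≤ k ≤ n, and let S_{(k)}(ω) denote the k-th smallest value among the first n coordinates S_0(ω), …, S_{n−1}(ω). Then P(S_n ≤ S_{(k)}) ≥ k / (n + 1). -/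
open MeasureTheory

/-- Number of coordinates strictly below coordinate `i`. -/
noncomputable def rk12 {m : ℕ} (x : Fin m → ℝ) (i : Fin m) : ℕ := ∑ j, if x j < x i then 1 else 0

lemma rk12_meas {m : ℕ} (i : Fin m) : Measurable (fun x : Fin m → ℝ => rk12 x i) := by
  unfold rk12
  refine Finset.measurable_sum _ fun j _ => ?_
  exact Measurable.ite (measurableSet_lt (measurable_pi_apply j) (measurable_pi_apply i))
    measurable_const measurable_const

lemma rk12_perm {m : ℕ} (x : Fin m → ℝ) (σ : Equiv.Perm (Fin m)) (i : Fin m) :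
    rk12 (fun j => x (σ j)) i = rk12 x (σ i) := by
  unfold rk12
  exact Equiv.sum_comp σ (fun j => if x j < x (σ i) then 1 else 0)

lemma rk12_many {m : ℕ} (x : Fin m → ℝ) (k : ℕ) (hk : k ≤ m) :
    k ≤ (Finset.univ.filter (fun i => rk12 x i < k)).card := by
  have hmono := Tuple.monotone_sort x
  set τ := Tuple.sort x
  have h1 : ∀ i : Fin m, rk12 x (τ i) ≤ i := by
    intro i
    rw [← rk12_perm]
    unfold rk12
    rw [← Finset.card_filter]
    calc _ ≤ (Finset.Iio i).card := by
          apply Finset.card_le_card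
          intro j hj
          simp only [Finset.mem_filter, Finset.mem_univ, true_and] at hj
          rw [Finset.mem_Iio]
          by_contra h
          exact absurd (hmono (not_lt.mp h)) (not_le.mpr hj)
      _ = i := by simp
  calc k = (Finset.univ : Finset (Fin k)).card := by simp
    _ ≤ _ := by
      apply Finset.card_le_card_of_injOn (fun i => τ (Fin.castLE hk i))
      · intro i _
        simp only [Finset.coe_filter, Finset.mem_univ, true_and, Set.mem_setOf_eq]
        exact lt_of_le_of_lt (h1 _) i.2
      · intro a _ b _ h
        simpa using h

lemma list12 (l : List ℝ) (hl : l.Pairwise (· ≤ ·)) (k : ℕ) (hk1 : 1 ≤ k) (hk : k ≤ l.length)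
    (t : ℝ) (h : l.getD (k - 1) 0 < t) : k ≤ l.countP (fun a => decide (a < t)) := by
  have h2 : (l.take k).countP (fun a => decide (a < t)) = (l.take k).length := by
    rw [List.countP_eq_length]
    intro a ha
    obtain ⟨i, hi, rfl⟩ := List.mem_iff_getElem.mp ha
    simp only [List.length_take] at hi
    rw [List.getD_eq_getElem _ _ (by omega)] at h
    simp only [List.getElem_take, decide_eq_true_eq]
    refine lt_of_le_of_lt ?_ h
    rcases eq_or_lt_of_le (show i ≤ k - 1 by omega) with e | e
    · subst e; exact le_rfl
    · exact List.pairwise_iff_getElem.mp hl _ _ _ _ e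
  have h3 := (List.take_sublist k l).countP_le (p := fun a => decide (a < t))
  rw [h2, List.length_take] at h3
  omega

lemma count12 {n : ℕ} (f : Fin n → ℝ) (t : ℝ) :
    (List.ofFn f).countP (fun a => decide (a < t)) = ∑ j, if f j < t then 1 else 0 := by
  induction n with
  | zero => simp
  | succ n ih =>
    rw [List.ofFn_succ, List.countP_cons, ih, Fin.sum_univ_succ, add_comm]
    simp

lemma key12 {n : ℕ} (x : Fin (n + 1) → ℝ) (k : ℕ) (hk1 : 1 ≤ k) (hkn : k ≤ n)
    (h : rk12 x (Fin.last n) < k) : x (Fin.last n) ≤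
        ((List.ofFn (fun i : Fin n => x i.castSucc)).insertionSort (· ≤ ·)).getD
          (k - 1) 0 := by
  by_contra hc
  have := list12 _ (List.pairwise_insertionSort (· ≤ ·) _) k hk1 (by simpa using hkn) _
    (not_le.mp hc)
  rw [(List.perm_insertionSort _ _).countP_eq, count12] at this
  unfold rk12 at h
  rw [Fin.sum_univ_castSucc] at h
  omega

theorem stmt_12 {Ω : Type*} [MeasurableSpace Ω]
    (P : Measure Ω) [IsProbabilityMeasure P]
    (n : ℕ) (hn : 1 ≤ n)
    (S : Ω → Fin (n + 1) → ℝ) (hS : Measurable S)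
    (hexch : ∀ σ : Equiv.Perm (Fin (n + 1)),
      P.map (fun ω => fun i => S ω (σ i)) = P.map S)
    (k : ℕ) (hk1 : 1 ≤ k) (hkn : k ≤ n) :
    ENNReal.ofReal ((k : ℝ) / ((n : ℝ) + 1)) ≤
      P {ω | S ω (Fin.last n) ≤
        ((List.ofFn (fun i : Fin n => S ω i.castSucc)).insertionSort (· ≤ ·)).getD
          (k - 1) 0} := by
  have hA : ∀ i : Fin (n + 1), MeasurableSet {x : Fin (n + 1) → ℝ | rk12 x i < k} := fun i =>
    measurableSet_lt (rk12_meas i) measurable_const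
  have hB : ∀ i : Fin (n + 1), MeasurableSet {ω | rk12 (S ω) i < k} := fun i => hS (hA i)
  have heq : ∀ i, P {ω | rk12 (S ω) i < k} = P {ω | rk12 (S ω) (Fin.last n) < k} := by
    intro i
    have h := congrArg (fun μ => μ {x | rk12 x (Fin.last n) < k}) (hexch (Equiv.swap (Fin.last n) i))
    rw [Measure.map_apply (by fun_prop) (hA _), Measure.map_apply hS (hA _)] at h
    simp only [Set.preimage_setOf_eq, rk12_perm, Equiv.swap_apply_left] at h
    exact h
  have hsum : (k : ENNReal) ≤ ∑ i : Fin (n + 1), P {ω | rk12 (S ω) i < k} := by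
    calc (k : ENNReal) = ∫⁻ _, (k : ENNReal) ∂P := by simp
      _ ≤ ∫⁻ ω, ∑ i : Fin (n + 1), {ω | rk12 (S ω) i < k}.indicator (fun _ => (1 : ENNReal)) ω ∂P := by
        apply lintegral_mono
        intro ω
        have := rk12_many (S ω) k (by omega)
        rw [Finset.card_filter] at this
        have h2 : (k : ENNReal) ≤ ((∑ i, if rk12 (S ω) i < k then 1 else 0 : ℕ) : ENNReal) := by
          exact_mod_cast this
        refine h2.trans (le_of_eq ?_)
        push_cast
        simp [Set.indicator_apply]
      _ = _ := by
        rw [lintegral_finsetSum _ (fun i _ => measurable_const.indicator (hB i))]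
        refine Finset.sum_congr rfl fun i _ => ?_
        rw [lintegral_indicator (hB i)]
        simp
  simp only [heq, Finset.sum_const, Finset.card_univ, Fintype.card_fin, nsmul_eq_mul] at hsum
  refine le_trans ?_ (measure_mono (μ := P) fun ω hω => key12 (S ω) k hk1 hkn hω)
  rw [ENNReal.ofReal_div_of_pos (by positivity)]
  have e : ENNReal.ofReal ((n : ℝ) + 1) = ((n + 1 : ℕ) : ENNReal) := by
    rw [← ENNReal.ofReal_natCast]; push_cast; rfl
  rw [e, ENNReal.ofReal_natCast]
  exact ENNReal.div_le_of_le_mul' hsum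
end
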